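/- Let P be a finite regular p-group with ω_1(P) ≥ 2, and let (g_1, ..., g_{ω_1(P)}) be a uniqueness basis of P in which g_i has order p^{μ_i(P)}. Then the element g' = g_1^{p^{μ_2(P)}} is central in P, and the quotient P/⟨g'⟩ is a regular p-group of order |P|/p^{μ_1(P)-μ_2(P)}, of exponent p^{μ_2(P)}, with type invariants (μ_2(P), μ_2(P), μ_3(P), ..., μ_{ω_1(P)}(P)), and with the same coexponent as P. -/

import Mathlib

/-- `℧_1(H) = ⟨h^p : h ∈ H⟩` for a subgroup `H`. -/
def MhoOne (p : ℕ) {P : Type} [Group P] (H : Subgroup P) : Subgroup P :=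
  Subgroup.closure {y : P | ∃ x ∈ H, y = x ^ p}

/-- A `p`-group `P` is regular if for all `x y : P` there is
`z ∈ ℧_1(γ_2(⟨x,y⟩))` with `x^p * y^p = (x*y)^p * z`. -/
def IsRegularPGroup (p : ℕ) (P : Type) [Group P] : Prop :=
  ∀ x y : P,
    ∃ z ∈ MhoOne p ⁅Subgroup.closure {x, y}, Subgroup.closure {x, y}⁆,
      x ^ p * y ^ p = (x * y) ^ p * z

/-- `Ω_i(P) = ⟨x : x^(p^i) = 1⟩`. -/
def OmegaSubgroup (p : ℕ) (P : Type) [Group P] (i : ℕ) : Subgroup P :=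
  Subgroup.closure {x : P | x ^ p ^ i = 1}

/-- `ω_i(P)`, defined by `p ^ ω_i(P) = |Ω_i(P)/Ω_{i-1}(P)|`. -/
noncomputable def omegaInv (p : ℕ) (P : Type) [Group P] (i : ℕ) : ℕ :=
  ((OmegaSubgroup p P (i - 1)).relIndex (OmegaSubgroup p P i)).factorization p

/-- `μ_j(P)` (for `j ≥ 1`): the dual partition of the partition `(ω_1(P), ω_2(P), ...)`,
i.e. `μ_j(P) = #{i ≥ 1 : ω_i(P) ≥ j}`.  The type invariants of `P` are
`μ_1(P) ≥ μ_2(P) ≥ ... ≥ μ_{ω_1(P)}(P)`. -/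
noncomputable def muInv (p : ℕ) (P : Type) [Group P] (j : ℕ) : ℕ :=
  Nat.card {i : ℕ // 1 ≤ i ∧ j ≤ omegaInv p P i}

/-- A tuple `(g 0, ..., g (r-1))` of non-identity elements of `P` is a uniqueness basis
if every element of `P` is uniquely the ordered product `g 0 ^ k 0 * ... * g (r-1) ^ k (r-1)`
with `0 ≤ k i < orderOf (g i)`. -/
def IsUniquenessBasis {P : Type} [Group P] {r : ℕ} (g : Fin r → P) : Prop :=
  (∀ i, g i ≠ 1) ∧
    ∀ x : P, ∃! k : (i : Fin r) → Fin (orderOf (g i)),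
      x = (((List.finRange r).map fun i => g i ^ ((k i : ℕ))).prod)


section RegTheory

open scoped commutatorElement

theorem aux_comm_le {P : Type} [Group P] (S : Subgroup P) (x y : P)
    (hS : ∀ h ∈ Subgroup.closure {x, y}, ∀ s ∈ S, h * s * h⁻¹ ∈ S)
    (hxy : ⁅x, y⁆ ∈ S) :
    ⁅Subgroup.closure {x, y}, Subgroup.closure {x, y}⁆ ≤ S := by
  set H := Subgroup.closure {x, y} with hH
  have key : ∀ a ∈ H, (⁅a, x⁆ ∈ S) → (⁅a, y⁆ ∈ S) → ∀ h ∈ H, ⁅a, h⁆ ∈ S := by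
    intro a ha hax hay h hh
    induction hh using Subgroup.closure_induction with
    | mem z hz =>
      rcases hz with rfl | rfl
      · exact hax
      · exact hay
    | one => simp [S.one_mem]
    | mul u v hu hv iu iv =>
      have : ⁅a, u * v⁆ = ⁅a, u⁆ * (u * ⁅a, v⁆ * u⁻¹) := by
        simp only [commutatorElement_def]; group
      rw [this]
      exact S.mul_mem iu (hS u hu _ iv)
    | inv u hu iu =>
      have : ⁅a, u⁻¹⁆ = u⁻¹ * ⁅a, u⁆⁻¹ * u⁻¹⁻¹ := by
        simp only [commutatorElement_def]; group
      rw [this]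
      exact hS _ (H.inv_mem hu) _ (S.inv_mem iu)
  have hxH : x ∈ H := Subgroup.subset_closure (by simp)
  have hyH : y ∈ H := Subgroup.subset_closure (by simp)
  have hx := key x hxH (by simp [S.one_mem]) hxy
  have hy := key y hyH (by rw [← commutatorElement_inv]; exact S.inv_mem hxy) (by simp [S.one_mem])
  rw [Subgroup.commutator_le]
  intro a ha b hb
  refine key a ha ?_ ?_ b hb
  · rw [← commutatorElement_inv]; exact S.inv_mem (hx a ha)
  · rw [← commutatorElement_inv]; exact S.inv_mem (hy a ha)

theorem aux_exists_M {p : ℕ} (hp : p.Prime) {P : Type} [Group P] [Finite P]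
    (hP : IsPGroup p P) (x y : P) :
    Commute x y ∨ ∃ M : Subgroup P, M < Subgroup.closure {x, y} ∧ x ∈ M ∧
      ∀ h ∈ Subgroup.closure {x, y}, ∀ m ∈ M, h * m * h⁻¹ ∈ M := by
  have : Fact p.Prime := ⟨hp⟩
  set H := Subgroup.closure {x, y} with hH
  have hxH : x ∈ H := Subgroup.subset_closure (by simp)
  have hyH : y ∈ H := Subgroup.subset_closure (by simp)
  have hHp : IsPGroup p H := hP.to_subgroup H
  have : Group.IsNilpotent H := hHp.isNilpotent
  rcases eq_top_or_exists_le_coatom (Subgroup.zpowers (⟨x, hxH⟩ : H)) with h | ⟨M, hM, hle⟩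
  · left
    have : (⟨y, hyH⟩ : H) ∈ Subgroup.zpowers (⟨x, hxH⟩ : H) := by rw [h]; trivial
    obtain ⟨k, hk⟩ := this
    have hk' : x ^ k = y := by
      have := congrArg Subtype.val hk
      simpa using this
    rw [← hk']
    exact (Commute.refl x).zpow_right k
  · right
    have hn : M.Normal := Subgroup.NormalizerCondition.normal_of_coatom M Group.normalizerCondition_of_isNilpotent hM
    refine ⟨M.map H.subtype, ?_, ?_, ?_⟩
    · refine lt_of_le_of_ne (Subgroup.map_subtype_le M) ?_
      intro he
      apply hM.1
      rw [eq_top_iff]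
      rintro ⟨z, hz⟩ -
      have hz2 := hz
      rw [← he] at hz2
      obtain ⟨m, hm, hmz⟩ := hz2
      have : m = ⟨z, hz⟩ := Subtype.ext hmz
      exact this ▸ hm
    · exact ⟨⟨x, hxH⟩, hle (Subgroup.mem_zpowers _), rfl⟩
    · rintro h hh _ ⟨m, hm, rfl⟩
      exact ⟨⟨h, hh⟩ * m * ⟨h, hh⟩⁻¹, hn.conj_mem m hm _, rfl⟩

theorem aux_reg_pow {p : ℕ} {P : Type} [Group P] (hreg : IsRegularPGroup p P)
    (S : Subgroup P) (hSp : ∀ s ∈ S, s ^ p = 1) (x y : P)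
    (hS : ∀ h ∈ Subgroup.closure {x, y}, ∀ s ∈ S, h * s * h⁻¹ ∈ S)
    (hxy : ⁅x, y⁆ ∈ S) : (x * y) ^ p = x ^ p * y ^ p := by
  obtain ⟨z, hz, h⟩ := hreg x y
  have hle := aux_comm_le S x y hS hxy
  have : MhoOne p ⁅Subgroup.closure {x, y}, Subgroup.closure {x, y}⁆ ≤ ⊥ := by
    unfold MhoOne
    rw [Subgroup.closure_le]
    rintro _ ⟨w, hw, rfl⟩
    simpa using hSp w (hle hw)
  have hz1 : z = 1 := by simpa using this hz
  rw [h, hz1, mul_one]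

theorem aux_B {p : ℕ} (hp : p.Prime) {P : Type} [Group P] [Finite P]
    (hP : IsPGroup p P) (hreg : IsRegularPGroup p P) :
    ∀ (n : ℕ) (x y : P), Nat.card (Subgroup.closure {x, y}) = n →
      x ^ p = 1 → y ^ p = 1 → (x * y) ^ p = 1 := by
  intro n
  induction n using Nat.strong_induction_on with
  | _ n ih =>
  intro x y hn hx hy
  rcases aux_exists_M hp hP x y with hc | ⟨M, hMlt, hxM, hMn⟩
  · rw [hc.mul_pow, hx, hy, one_mul]
  · have hcl : ∀ a ∈ M, ∀ b ∈ M, a ^ p = 1 → b ^ p = 1 → (a * b) ^ p = 1 := by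
      intro a ha b hb
      refine ih _ ?_ a b rfl
      rw [← hn]
      have h1 : Subgroup.closure {a, b} < Subgroup.closure {x, y} := by
        refine lt_of_le_of_lt ?_ hMlt
        rw [Subgroup.closure_le]
        rintro _ (rfl | rfl) <;> assumption
      exact Set.Finite.card_lt_card (Set.toFinite _) h1
    let S : Subgroup P :=
      { carrier := {s | s ∈ M ∧ s ^ p = 1}
        one_mem' := ⟨M.one_mem, one_pow p⟩
        mul_mem' := fun {a b} ha hb => ⟨M.mul_mem ha.1 hb.1, hcl a ha.1 b hb.1 ha.2 hb.2⟩
        inv_mem' := fun {a} ha => ⟨M.inv_mem ha.1, by rw [inv_pow, ha.2, inv_one]⟩ }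
    have hyH : y ∈ Subgroup.closure {x, y} := Subgroup.subset_closure (by simp)
    have hS : ∀ h ∈ Subgroup.closure {x, y}, ∀ s ∈ S, h * s * h⁻¹ ∈ S := by
      intro h hh s hs
      refine ⟨hMn h hh s hs.1, ?_⟩
      rw [conj_pow, hs.2]; simp
    have hxS : x ∈ S := ⟨hxM, hx⟩
    have hxy : ⁅x, y⁆ ∈ S := by
      have : ⁅x, y⁆ = x * (y * x⁻¹ * y⁻¹) := by simp only [commutatorElement_def]; group
      rw [this]
      exact S.mul_mem hxS (hS y hyH _ (S.inv_mem hxS))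
    rw [aux_reg_pow hreg S (fun s hs => hs.2) x y hS hxy, hx, hy, one_mul]

def auxOmega {p : ℕ} (hp : p.Prime) {P : Type} [Group P] [Finite P]
    (hP : IsPGroup p P) (hreg : IsRegularPGroup p P) : Subgroup P where
  carrier := {s | s ^ p = 1}
  one_mem' := one_pow p
  mul_mem' := fun {a b} ha hb => aux_B hp hP hreg _ a b rfl ha hb
  inv_mem' := fun {a} ha => by
    have ha' : a ^ p = 1 := ha
    change a⁻¹ ^ p = 1
    rw [inv_pow, ha', inv_one]

theorem auxOmega_normal {p : ℕ} (hp : p.Prime) {P : Type} [Group P] [Finite P]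
    (hP : IsPGroup p P) (hreg : IsRegularPGroup p P) : (auxOmega hp hP hreg).Normal := by
  constructor
  intro s hs h
  have hs' : s ^ p = 1 := hs
  change (h * s * h⁻¹) ^ p = 1
  rw [conj_pow, hs']; simp

theorem aux_A {p : ℕ} (hp : p.Prime) {P : Type} [Group P] [Finite P]
    (hP : IsPGroup p P) (hreg : IsRegularPGroup p P) :
    ∀ (n : ℕ) (x y : P), Nat.card (Subgroup.closure {x, y}) = n →
      x ^ p = y ^ p → (x⁻¹ * y) ^ p = 1 := by
  intro n
  induction n using Nat.strong_induction_on with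
  | _ n ih =>
  intro x y hn hxy
  rcases aux_exists_M hp hP x y with hc | ⟨M, hMlt, hxM, hMn⟩
  · rw [hc.inv_left.mul_pow, inv_pow, hxy, inv_mul_cancel]
  · have hyH : y ∈ Subgroup.closure {x, y} := Subgroup.subset_closure (by simp)
    have h1 : (x⁻¹ * (y * x * y⁻¹)) ^ p = 1 := by
      refine ih _ ?_ x (y * x * y⁻¹) rfl ?_
      · rw [← hn]
        have h1 : Subgroup.closure {x, y * x * y⁻¹} < Subgroup.closure {x, y} := by
          refine lt_of_le_of_lt ?_ hMlt
          rw [Subgroup.closure_le]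
          rintro _ (rfl | rfl)
          · exact hxM
          · exact hMn y hyH _ hxM
        exact Set.Finite.card_lt_card (Set.toFinite _) h1
      · rw [conj_pow, hxy]
        group
    have hN := auxOmega_normal hp hP hreg
    have h2 : ⁅x⁻¹, y⁆ ∈ auxOmega hp hP hreg := by
      change _ ^ p = 1
      rw [← h1]; congr 1; simp only [commutatorElement_def]; group
    rw [aux_reg_pow hreg _ (fun s hs => hs) x⁻¹ y (fun h _ s hs => hN.conj_mem s hs h) h2,
      inv_pow, hxy, inv_mul_cancel]

theorem aux_A_iff {p : ℕ} (hp : p.Prime) {P : Type} [Group P] [Finite P]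
    (hP : IsPGroup p P) (hreg : IsRegularPGroup p P) (x y : P) :
    x ^ p = y ^ p ↔ (x⁻¹ * y) ^ p = 1 := by
  refine ⟨aux_A hp hP hreg _ x y rfl, fun h => ?_⟩
  have hN := auxOmega_normal hp hP hreg
  have hu : x⁻¹ * y ∈ auxOmega hp hP hreg := h
  have h2 : ⁅x, x⁻¹ * y⁆ ∈ auxOmega hp hP hreg := by
    rw [commutatorElement_def]
    exact Subgroup.mul_mem _ (hN.conj_mem _ hu x) (Subgroup.inv_mem _ hu)
  have := aux_reg_pow hreg _ (fun s hs => hs) x (x⁻¹ * y) (fun h _ s hs => hN.conj_mem s hs h) h2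
  rw [mul_inv_cancel_left, h, mul_one] at this
  exact this.symm

theorem aux_quot_reg {p : ℕ} {P : Type} [Group P] (hreg : IsRegularPGroup p P)
    (N : Subgroup P) [N.Normal] : IsRegularPGroup p (P ⧸ N) := by
  intro x y
  induction x using QuotientGroup.induction_on with | _ x => ?_
  induction y using QuotientGroup.induction_on with | _ y => ?_
  obtain ⟨z, hz, h⟩ := hreg x y
  refine ⟨(z : P ⧸ N), ?_, ?_⟩
  · have h1 : (Subgroup.closure {x, y}).map (QuotientGroup.mk' N)
        = Subgroup.closure {(x : P ⧸ N), (y : P ⧸ N)} := by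
      rw [MonoidHom.map_closure, Set.image_pair]; rfl
    rw [← h1, ← Subgroup.map_commutator]
    have h2 : MhoOne p ⁅Subgroup.closure {x, y}, Subgroup.closure {x, y}⁆ ≤
        (MhoOne p (Subgroup.map (QuotientGroup.mk' N)
          ⁅Subgroup.closure {x, y}, Subgroup.closure {x, y}⁆)).comap (QuotientGroup.mk' N) := by
      unfold MhoOne
      rw [Subgroup.closure_le]
      rintro _ ⟨w, hw, rfl⟩
      exact Subgroup.subset_closure ⟨QuotientGroup.mk' N w, ⟨w, hw, rfl⟩, by simp⟩
    exact h2 hz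
  · have := congrArg (QuotientGroup.mk' N) h
    simpa using this

theorem aux_pow_iff {p : ℕ} (hp : p.Prime) (i : ℕ) : ∀ (P : Type) [Group P] [Finite P],
    IsPGroup p P → IsRegularPGroup p P → ∀ x y : P,
    x ^ p ^ i = y ^ p ^ i ↔ (x⁻¹ * y) ^ p ^ i = 1 := by
  induction i with
  | zero => intro P _ _ _ _ x y; simp [inv_mul_eq_one]
  | succ i ih =>
    intro P _ _ hP hreg x y
    have hN := auxOmega_normal hp hP hreg
    set O := auxOmega hp hP hreg with hO
    have := ih (P ⧸ O) (hP.to_quotient O) (aux_quot_reg hreg O) (x : P ⧸ O) (y : P ⧸ O)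
    rw [pow_succ, pow_mul, pow_mul, pow_mul, aux_A_iff hp hP hreg]
    have e1 : ((x ^ p ^ i)⁻¹ * y ^ p ^ i) ^ p = 1 ↔ ((x : P ⧸ O) ^ p ^ i = (y : P ⧸ O) ^ p ^ i) := by
      rw [← QuotientGroup.mk_pow, ← QuotientGroup.mk_pow, QuotientGroup.eq]
      rfl
    have e2 : ((x⁻¹ * y) ^ p ^ i) ^ p = 1 ↔ ((x : P ⧸ O)⁻¹ * (y : P ⧸ O)) ^ p ^ i = 1 := by
      rw [← QuotientGroup.mk_inv, ← QuotientGroup.mk_mul, ← QuotientGroup.mk_pow,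
        QuotientGroup.eq_one_iff]
      rfl
    rw [e1, e2, this]

theorem aux_mem_Omega {p : ℕ} (hp : p.Prime) {P : Type} [Group P] [Finite P]
    (hP : IsPGroup p P) (hreg : IsRegularPGroup p P) (i : ℕ) (x : P) :
    x ∈ OmegaSubgroup p P i ↔ x ^ p ^ i = 1 := by
  refine ⟨fun h => ?_, fun h => Subgroup.subset_closure h⟩
  unfold OmegaSubgroup at h
  induction h using Subgroup.closure_induction with
  | mem z hz => exact hz
  | one => simp
  | mul u v _ _ iu iv =>
    have := (aux_pow_iff hp i P hP hreg u⁻¹ v).1 (by rw [inv_pow, iu, iv, inv_one])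
    simpa using this
  | inv u _ iu => rw [inv_pow, iu, inv_one]

theorem aux_relIndex {p : ℕ} (hp : p.Prime) {P : Type} [Group P] [Finite P]
    (hP : IsPGroup p P) (hreg : IsRegularPGroup p P) (i : ℕ) (K : Subgroup P) :
    (OmegaSubgroup p P i).relIndex K = Nat.card ((fun x : P => x ^ p ^ i) '' (K : Set P)) := by
  have hiff : ∀ a b : K, QuotientGroup.leftRel ((OmegaSubgroup p P i).subgroupOf K) a b ↔
      (a : P) ^ p ^ i = (b : P) ^ p ^ i := by
    intro a b
    rw [QuotientGroup.leftRel_apply, Subgroup.mem_subgroupOf, aux_mem_Omega hp hP hreg,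
      aux_pow_iff hp i P hP hreg]
    simp
  unfold Subgroup.relIndex Subgroup.index
  refine Nat.card_congr (Equiv.ofBijective (Quotient.lift
    (fun a : K => (⟨(a : P) ^ p ^ i, ⟨a, a.2, rfl⟩⟩ : (fun x : P => x ^ p ^ i) '' (K : Set P)))
    (fun a b h => Subtype.ext ((hiff a b).1 h))) ⟨?_, ?_⟩)
  · intro a b
    induction a using Quotient.inductionOn with | _ a => ?_
    induction b using Quotient.inductionOn with | _ b => ?_
    intro h
    exact Quotient.sound ((hiff a b).2 (congrArg Subtype.val h))
  · rintro ⟨_, a, ha, rfl⟩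
    exact ⟨Quotient.mk _ ⟨a, ha⟩, rfl⟩

end RegTheory

section RegMain

theorem aux_Omega_mono {p : ℕ} {P : Type} [Group P] {i j : ℕ} (h : i ≤ j) :
    OmegaSubgroup p P i ≤ OmegaSubgroup p P j := by
  apply Subgroup.closure_mono
  intro x hx
  have hx' : x ^ p ^ i = 1 := hx
  change x ^ p ^ j = 1
  obtain ⟨k, rfl⟩ := Nat.exists_eq_add_of_le h
  rw [pow_add, pow_mul, hx', one_pow]

theorem aux_relIndex_mul {P : Type} [Group P] {H K : Subgroup P} (h : H ≤ K) :
    H.relIndex K * Nat.card H = Nat.card K := by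
  rw [← Subgroup.relIndex_bot_left H, ← Subgroup.relIndex_bot_left K, mul_comm]
  exact Subgroup.relIndex_mul_relIndex _ _ _ bot_le h

theorem aux_relIndex_pow {p n : ℕ} (hp : p.Prime) {P : Type} [Group P]
    (hcard : Nat.card P = p ^ n) (H K : Subgroup P) : ∃ k, H.relIndex K = p ^ k := by
  have h1 : H.relIndex K ∣ p ^ n :=
    hcard ▸ (Subgroup.relIndex_dvd_card H K).trans (Subgroup.card_subgroup_dvd_card K)
  obtain ⟨k, _, hk⟩ := (Nat.dvd_prime_pow hp).1 h1
  exact ⟨k, hk⟩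

theorem aux_omega_anti {p n : ℕ} (hp : p.Prime) {P : Type} [Group P] [Finite P]
    (hcard : Nat.card P = p ^ n) (hP : IsPGroup p P) (hreg : IsRegularPGroup p P) (i : ℕ) :
    omegaInv p P (i + 2) ≤ omegaInv p P (i + 1) := by
  unfold omegaInv
  obtain ⟨a, ha⟩ := aux_relIndex_pow hp hcard (OmegaSubgroup p P (i + 2 - 1)) (OmegaSubgroup p P (i + 2))
  obtain ⟨b, hb⟩ := aux_relIndex_pow hp hcard (OmegaSubgroup p P (i + 1 - 1)) (OmegaSubgroup p P (i + 1))
  have hle : (OmegaSubgroup p P (i + 2 - 1)).relIndex (OmegaSubgroup p P (i + 2)) ≤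
      (OmegaSubgroup p P (i + 1 - 1)).relIndex (OmegaSubgroup p P (i + 1)) := by
    rw [aux_relIndex hp hP hreg, aux_relIndex hp hP hreg]
    refine Nat.card_mono (Set.toFinite _) ?_
    rintro _ ⟨x, hx, rfl⟩
    refine ⟨x ^ p, ?_, ?_⟩
    · have hx' := (aux_mem_Omega hp hP hreg _ _).1 hx
      refine (aux_mem_Omega hp hP hreg _ _).2 ?_
      rw [← pow_mul, ← pow_succ', hx']
    · change (x ^ p) ^ p ^ (i + 1 - 1) = x ^ p ^ (i + 2 - 1)
      rw [← pow_mul, ← pow_succ']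
      rfl
  rw [ha, hb] at hle ⊢
  rw [hp.factorization_pow, hp.factorization_pow]
  simpa using (Nat.pow_le_pow_iff_right hp.one_lt).1 hle

theorem aux_init (f : ℕ → ℕ) (n : ℕ) (hf : ∀ i, f (i + 2) ≤ f (i + 1)) (h0 : ∀ i, n < i → f i = 0)
    (j : ℕ) (hj : 1 ≤ j) (i : ℕ) (hi : 1 ≤ i) :
    j ≤ f i ↔ i ≤ Nat.card {i : ℕ // 1 ≤ i ∧ j ≤ f i} := by
  have hanti : ∀ a b, 1 ≤ a → a ≤ b → f b ≤ f a := by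
    intro a b ha hab
    induction b, hab using Nat.le_induction with
    | base => exact le_rfl
    | succ b hb ih =>
      obtain ⟨c, rfl⟩ : ∃ c, b = c + 1 := ⟨b - 1, by omega⟩
      exact (hf c).trans ih
  have hiff : ∀ i, (1 ≤ i ∧ j ≤ f i) ↔ i ∈ Finset.Icc 1 (Nat.findGreatest (fun i => j ≤ f i) n) := by
    intro i
    rw [Finset.mem_Icc]
    constructor
    · rintro ⟨h1, h2⟩
      refine ⟨h1, Nat.le_findGreatest ?_ h2⟩
      by_contra h
      have := h0 i (by omega)
      omega
    · rintro ⟨h1, h2⟩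
      refine ⟨h1, ?_⟩
      have h3 : j ≤ f (Nat.findGreatest (fun i => j ≤ f i) n) :=
        Nat.findGreatest_of_ne_zero (P := fun i => j ≤ f i) rfl (by omega)
      exact h3.trans (hanti _ _ h1 h2)
  have hc : Nat.card {i : ℕ // 1 ≤ i ∧ j ≤ f i} = Nat.findGreatest (fun i => j ≤ f i) n := by
    rw [Nat.card_congr (Equiv.subtypeEquivRight hiff), Nat.card_eq_fintype_card,
      Fintype.card_coe, Nat.card_Icc]
    omega
  rw [hc]
  have := hiff i
  rw [Finset.mem_Icc] at this
  tauto

theorem aux_omega_zero {p n : ℕ} (hp : p.Prime) {P : Type} [Group P]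
    (h : ∀ x : P, x ^ p ^ n = 1) (i : ℕ) (hi : n < i) : omegaInv p P i = 0 := by
  have ht : OmegaSubgroup p P n = ⊤ := by
    rw [eq_top_iff]
    intro x _
    exact Subgroup.subset_closure (h x)
  have h1 : OmegaSubgroup p P (i - 1) = ⊤ :=
    top_le_iff.1 (ht ▸ aux_Omega_mono (by omega))
  unfold omegaInv
  rw [h1]
  simp

theorem aux_gen {P : Type} [Group P] {r : ℕ} (g : Fin r → P)
    (hb : IsUniquenessBasis g) (H : Subgroup P) (h : ∀ i, g i ∈ H) (x : P) : x ∈ H := by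
  obtain ⟨k, hk, _⟩ := hb.2 x
  rw [hk]
  apply Subgroup.list_prod_mem
  intro y hy
  obtain ⟨i, _, rfl⟩ := List.mem_map.1 hy
  exact H.pow_mem (h i) _

theorem aux_card_Omega_quot {p m : ℕ} (hp : p.Prime) {P : Type} [Group P] [Finite P]
    (hP : IsPGroup p P) (hreg : IsRegularPGroup p P) (g0 : P)
    [hN : (Subgroup.zpowers (g0 ^ p ^ m)).Normal] (i : ℕ) (hi : i ≤ m) :
    Nat.card (OmegaSubgroup p (P ⧸ Subgroup.zpowers (g0 ^ p ^ m)) i) =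
      Nat.card (OmegaSubgroup p P i) := by
  set N := Subgroup.zpowers (g0 ^ p ^ m) with hNdef
  have hQ : IsPGroup p (P ⧸ N) := hP.to_quotient N
  have hregQ := aux_quot_reg hreg N
  set K := (OmegaSubgroup p (P ⧸ N) i).comap (QuotientGroup.mk' N) with hK
  have hmem : ∀ x, x ∈ K ↔ x ^ p ^ i ∈ N := by
    intro x
    rw [hK, Subgroup.mem_comap, aux_mem_Omega hp hQ hregQ, ← map_pow, QuotientGroup.mk'_apply,
      QuotientGroup.eq_one_iff]
  have hOK : OmegaSubgroup p P i ≤ K := by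
    intro x hx
    rw [hmem, (aux_mem_Omega hp hP hreg i x).1 hx]
    exact N.one_mem
  have hNK : N ≤ K := fun x hx => (hmem x).2 (N.pow_mem hx _)
  have e1 : N.relIndex K = Nat.card (OmegaSubgroup p (P ⧸ N) i) := by
    have h := Subgroup.relIndex_comap (⊥ : Subgroup (P ⧸ N)) (QuotientGroup.mk' N) K
    rw [MonoidHom.comap_bot, QuotientGroup.ker_mk', Subgroup.relIndex_bot_left, hK,
      Subgroup.map_comap_eq_self_of_surjective (QuotientGroup.mk'_surjective N)] at h
    exact h
  have e2 : (OmegaSubgroup p P i).relIndex K = Nat.card N := by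
    rw [aux_relIndex hp hP hreg]
    have : (fun x : P => x ^ p ^ i) '' (K : Set P) = (N : Set P) := by
      ext z
      constructor
      · rintro ⟨x, hx, rfl⟩
        exact (hmem x).1 hx
      · intro hz
        obtain ⟨k, hk⟩ := hz
        have hk' : (g0 ^ p ^ m) ^ k = z := hk
        have hz : ((g0 ^ p ^ (m - i)) ^ k) ^ p ^ i = z := by
          rw [← hk', ← zpow_natCast, ← zpow_mul, mul_comm, zpow_mul, zpow_natCast, ← pow_mul,
            ← pow_add, Nat.sub_add_cancel hi]
        refine ⟨(g0 ^ p ^ (m - i)) ^ k, ?_, hz⟩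
        refine (hmem _).2 ?_
        rw [hz, ← hk']
        exact ⟨k, rfl⟩
    rw [this]
    rfl
  have e3 := aux_relIndex_mul hOK
  have e4 := aux_relIndex_mul hNK
  rw [e2] at e3
  rw [e1] at e4
  have : 0 < Nat.card N := Nat.card_pos
  apply Nat.eq_of_mul_eq_mul_right this
  rw [e4, ← e3, mul_comm]

end RegMain

/-- Let `P` be a finite regular `p`-group with `ω_1(P) ≥ 2`, and let
`(g_1, ..., g_{ω_1(P)})` be a uniqueness basis with `orderOf (g_i) = p ^ μ_i(P)`.
Then `g' = g_1 ^ (p ^ μ_2(P))` is central, and the quotient `P/⟨g'⟩` is a regular `p`-group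
of order `|P| / p ^ (μ_1(P) - μ_2(P))`, exponent `p ^ μ_2(P)`, with type invariants
`(μ_2(P), μ_2(P), μ_3(P), ..., μ_{ω_1(P)}(P))`, and the same coexponent as `P`. -/
theorem quotient_by_power_of_first_basis_element
    (p n e : ℕ) (hp : p.Prime) (P : Type) [Group P] [Finite P]
    (hcard : Nat.card P = p ^ n) (hexp : Monoid.exponent P = p ^ e)
    (hreg : IsRegularPGroup p P)
    (hω : 2 ≤ omegaInv p P 1)
    (g : Fin (omegaInv p P 1) → P)
    (hbasis : IsUniquenessBasis g)
    (hord : ∀ i, orderOf (g i) = p ^ muInv p P (i.val + 1)) :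
    g ⟨0, by omega⟩ ^ p ^ muInv p P 2 ∈ Subgroup.center P ∧
      ∀ hN : (Subgroup.zpowers (g ⟨0, by omega⟩ ^ p ^ muInv p P 2)).Normal,
        letI := hN
        IsRegularPGroup p (P ⧸ Subgroup.zpowers (g ⟨0, by omega⟩ ^ p ^ muInv p P 2)) ∧
        Nat.card (P ⧸ Subgroup.zpowers (g ⟨0, by omega⟩ ^ p ^ muInv p P 2)) =
          Nat.card P / p ^ (muInv p P 1 - muInv p P 2) ∧
        Monoid.exponent (P ⧸ Subgroup.zpowers (g ⟨0, by omega⟩ ^ p ^ muInv p P 2)) =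
          p ^ muInv p P 2 ∧
        muInv p (P ⧸ Subgroup.zpowers (g ⟨0, by omega⟩ ^ p ^ muInv p P 2)) 1 = muInv p P 2 ∧
        (∀ j : ℕ, 2 ≤ j →
          muInv p (P ⧸ Subgroup.zpowers (g ⟨0, by omega⟩ ^ p ^ muInv p P 2)) j = muInv p P j) ∧
        (∃ n' e' : ℕ,
          Nat.card (P ⧸ Subgroup.zpowers (g ⟨0, by omega⟩ ^ p ^ muInv p P 2)) = p ^ n' ∧
          Monoid.exponent (P ⧸ Subgroup.zpowers (g ⟨0, by omega⟩ ^ p ^ muInv p P 2)) = p ^ e' ∧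
          n' - e' = n - e) := by
  have hP : IsPGroup p P := IsPGroup.of_card hcard
  have hcardP : ∀ x : P, x ^ p ^ n = 1 := fun x => hcard ▸ pow_card_eq_one'
  have hinit : ∀ j, 1 ≤ j → ∀ i, 1 ≤ i → (j ≤ omegaInv p P i ↔ i ≤ muInv p P j) :=
    aux_init (omegaInv p P) n (aux_omega_anti hp hcard hP hreg)
      (fun i hi => aux_omega_zero hp hcardP i hi)
  have hmono : ∀ j k, 1 ≤ j → j ≤ k → muInv p P k ≤ muInv p P j := by
    intro j k hj hjk
    rcases Nat.eq_zero_or_pos (muInv p P k) with h | h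
    · omega
    · exact (hinit j hj _ h).1 (hjk.trans ((hinit k (by omega) _ h).2 le_rfl))
  have hm1 : 1 ≤ muInv p P 2 := (hinit 2 (by omega) 1 le_rfl).1 hω
  have hm21 : muInv p P 2 ≤ muInv p P 1 := hmono 1 2 le_rfl (by omega)
  set g0 := g ⟨0, by omega⟩ with hg0
  have hord0 : orderOf g0 = p ^ muInv p P 1 := hord _
  have hpow : ∀ i, i ≠ ⟨0, by omega⟩ → g i ^ p ^ muInv p P 2 = 1 := by
    intro i hi
    have hi' : i.val ≠ 0 := fun h => hi (Fin.ext h)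
    rw [← orderOf_dvd_iff_pow_eq_one, hord i]
    exact pow_dvd_pow p (hmono _ _ (by omega) (by omega))
  have hcen : g0 ^ p ^ muInv p P 2 ∈ Subgroup.center P := by
    rw [Subgroup.mem_center_iff]
    suffices h : ∀ x, x ∈ Subgroup.centralizer {g0 ^ p ^ muInv p P 2} by
      intro x
      exact (Subgroup.mem_centralizer_singleton_iff.1 (h x))
    refine aux_gen g hbasis _ (fun i => ?_)
    rw [Subgroup.mem_centralizer_singleton_iff]
    by_cases hi : i = ⟨0, by omega⟩
    · rw [hi, ← hg0]
      exact ((Commute.refl g0).pow_right _)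
    · set y := g i with hy
      have hy1 : y ^ p ^ muInv p P 2 = 1 := hpow i hi
      have h1 : (y⁻¹ * (g0 * y * g0⁻¹)) ^ p ^ muInv p P 2 = 1 := by
        rw [← aux_pow_iff hp _ P hP hreg, conj_pow, hy1]
        simp
      have h2 : (g0⁻¹ * (y⁻¹ * g0 * y⁻¹⁻¹)) ^ p ^ muInv p P 2 = 1 := by
        have : g0⁻¹ * (y⁻¹ * g0 * y⁻¹⁻¹) = g0⁻¹ * (y⁻¹ * (g0 * y * g0⁻¹)) * g0⁻¹⁻¹ := by group
        rw [this, conj_pow, h1]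
        simp
      rw [← aux_pow_iff hp _ P hP hreg, conj_pow] at h2
      generalize g0 ^ p ^ muInv p P 2 = w at h2 ⊢
      have h3 : y * w = y * (y⁻¹ * w * y⁻¹⁻¹) := by rw [← h2]
      rw [h3]; group
  refine ⟨hcen, ?_⟩
  intro hN
  set N := Subgroup.zpowers (g0 ^ p ^ muInv p P 2) with hNdef
  have hQ : IsPGroup p (P ⧸ N) := hP.to_quotient N
  have hregQ := aux_quot_reg hreg N
  have hcN : Nat.card N = p ^ (muInv p P 1 - muInv p P 2) := by
    rw [hNdef, Nat.card_zpowers, orderOf_pow, hord0,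
      Nat.gcd_eq_right (pow_dvd_pow p hm21), Nat.pow_div hm21 hp.pos]
  have hcQ : Nat.card P = Nat.card (P ⧸ N) * Nat.card N :=
    Subgroup.card_eq_card_quotient_mul_card_subgroup N
  have hcQ' : Nat.card (P ⧸ N) = Nat.card P / p ^ (muInv p P 1 - muInv p P 2) := by
    rw [hcQ, hcN, Nat.mul_div_cancel _ (pow_pos hp.pos _)]
  have hcardOm : ∀ i, i ≤ muInv p P 2 → Nat.card (OmegaSubgroup p (P ⧸ N) i) =
      Nat.card (OmegaSubgroup p P i) := fun i hi => aux_card_Omega_quot hp hP hreg g0 i hi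
  have hpowQ : ∀ x : P ⧸ N, x ^ p ^ muInv p P 2 = 1 := by
    intro x
    induction x using QuotientGroup.induction_on with | _ x => ?_
    rw [← aux_mem_Omega hp hQ hregQ]
    suffices h : x ∈ (OmegaSubgroup p (P ⧸ N) (muInv p P 2)).comap (QuotientGroup.mk' N) from h
    refine aux_gen g hbasis _ (fun i => ?_) x
    rw [Subgroup.mem_comap, aux_mem_Omega hp hQ hregQ, ← map_pow, QuotientGroup.mk'_apply,
      QuotientGroup.eq_one_iff]
    by_cases hi : i = ⟨0, by omega⟩
    · rw [hi]
      exact Subgroup.mem_zpowers _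
    · rw [hpow i hi]
      exact N.one_mem
  have homQ : ∀ i, 1 ≤ i → i ≤ muInv p P 2 → omegaInv p (P ⧸ N) i = omegaInv p P i := by
    intro i h1 h2
    unfold omegaInv
    congr 1
    have e1 := aux_relIndex_mul (aux_Omega_mono (p := p) (P := P) (Nat.sub_le i 1))
    have e2 := aux_relIndex_mul (aux_Omega_mono (p := p) (P := P ⧸ N) (Nat.sub_le i 1))
    rw [hcardOm i h2, hcardOm (i - 1) (by omega), ← e1] at e2
    rw [Nat.eq_of_mul_eq_mul_right Nat.card_pos e2]
  have homQ0 : ∀ i, muInv p P 2 < i → omegaInv p (P ⧸ N) i = 0 := fun i hi =>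
    aux_omega_zero hp hpowQ i hi
  have hexpQ : Monoid.exponent (P ⧸ N) = p ^ muInv p P 2 := by
    have hd : Monoid.exponent (P ⧸ N) ∣ p ^ muInv p P 2 :=
      Monoid.exponent_dvd_of_forall_pow_eq_one hpowQ
    obtain ⟨m, hm, hme⟩ := (Nat.dvd_prime_pow hp).1 hd
    rcases hm.lt_or_eq with hlt | heq
    · exfalso
      have h1 : omegaInv p (P ⧸ N) (muInv p P 2) = 0 :=
        aux_omega_zero hp (fun x => hme ▸ Monoid.pow_exponent_eq_one x) _ hlt
      have h2 := (hinit 2 (by omega) _ hm1).2 le_rfl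
      rw [homQ _ hm1 le_rfl] at h1
      omega
    · rw [hme, heq]
  have he : e = muInv p P 1 := by
    apply Nat.pow_right_injective hp.two_le
    change p ^ e = p ^ muInv p P 1
    rw [← hexp]
    apply Nat.dvd_antisymm
    · apply Monoid.exponent_dvd_of_forall_pow_eq_one
      intro x
      rw [← aux_mem_Omega hp hP hreg]
      refine aux_gen g hbasis _ (fun i => ?_) x
      rw [aux_mem_Omega hp hP hreg, ← orderOf_dvd_iff_pow_eq_one, hord i]
      exact pow_dvd_pow p (hmono _ _ (by omega) (by omega))
    · rw [← hord0]
      exact Monoid.order_dvd_exponent g0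
  refine ⟨hregQ, hcQ', hexpQ, ?_, ?_, ?_⟩
  · refine Nat.card_congr (Equiv.subtypeEquivRight fun i => ?_)
    refine and_congr_right fun hi => ?_
    rw [hinit 2 (by omega) i hi]
    by_cases h : i ≤ muInv p P 2
    · have := (hinit 1 (by omega) i hi).2 (h.trans hm21)
      rw [homQ i hi h]
      tauto
    · rw [homQ0 i (by omega)]
      omega
  · intro j hj
    refine Nat.card_congr (Equiv.subtypeEquivRight fun i => ?_)
    refine and_congr_right fun hi => ?_
    by_cases h : i ≤ muInv p P 2
    · rw [homQ i hi h]
    · have := hinit j (by omega) i hi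
      have := hmono 2 j (by omega) hj
      rw [homQ0 i (by omega)]
      omega
  · have hle : muInv p P 1 - muInv p P 2 ≤ n := by
      have : p ^ (muInv p P 1 - muInv p P 2) ∣ p ^ n := by
        rw [← hcN, ← hcard]; exact Subgroup.card_subgroup_dvd_card N
      exact (Nat.pow_dvd_pow_iff_le_right hp.one_lt).1 this
    refine ⟨n - (muInv p P 1 - muInv p P 2), muInv p P 2, ?_, hexpQ, ?_⟩
    · rw [hcQ', hcard, Nat.pow_div hle hp.pos]
    · omega
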